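/- Fix n ≥ 1 and let [·,·] denote the commutator of n×n real matrices. Let B₁, B₂, B₃ and g be smooth matrix-valued functions on an open subset U ⊆ ℝ×ℝ³ (coordinates (t,x₁,x₂,x₃)), with g(p) invertible for every p ∈ U, and set h_i := (∂_i g)·g⁻¹ for i = 1,2,3. Assume that on U one has (∂_t g)·g⁻¹ = ∑_{j=1}^{3} ∂_j h_j + ∑_{j=1}^{3} [B_j, h_j]. Then, on U, for each i = 1,2,3: (∂_t − Δ) h_i = −∑_{j=1}^{3} [h_j, ∂_j h_i] + ∑_{j=1}^{3} [[B_j, h_j], h_i] + ∂_i( ∑_{j=1}^{3} [B_j, h_j] ), where Δ := ∑_{j=1}^{3} ∂_j²; and moreover (∂_t − Δ) g = ( ∑_{j=1}^{3} [B_j, h_j] − ∑_{j=1}^{3} h_j·h_j )·g. -/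

import Mathlib

noncomputable section

attribute [local instance] Matrix.normedAddCommGroup Matrix.normedSpace

/-- Space-time domain `ℝ × ℝ³` (coordinates `(t, x₁, x₂, x₃)`). -/
abbrev Dom : Type := ℝ × EuclideanSpace ℝ (Fin 3)

/-- The time derivative `∂_t f` of a matrix-valued function on `ℝ × ℝ³`. -/
def Dt {n : ℕ} (f : Dom → Matrix (Fin n) (Fin n) ℝ) (q : Dom) : Matrix (Fin n) (Fin n) ℝ :=
  fderiv ℝ f q ((1 : ℝ), (0 : EuclideanSpace ℝ (Fin 3)))

/-- The spatial derivative `∂_j f` of a matrix-valued function on `ℝ × ℝ³`. -/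
def Dx {n : ℕ} (j : Fin 3) (f : Dom → Matrix (Fin n) (Fin n) ℝ) (q : Dom) :
    Matrix (Fin n) (Fin n) ℝ :=
  fderiv ℝ f q ((0 : ℝ), EuclideanSpace.single j 1)

def Dv {n : ℕ} (v : Dom) (f : Dom → Matrix (Fin n) (Fin n) ℝ) (q : Dom) :
    Matrix (Fin n) (Fin n) ℝ := fderiv ℝ f q v

def mulL (n : ℕ) : Matrix (Fin n) (Fin n) ℝ →L[ℝ] Matrix (Fin n) (Fin n) ℝ →L[ℝ]
    Matrix (Fin n) (Fin n) ℝ :=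
  LinearMap.toContinuousLinearMap
    ((LinearMap.toContinuousLinearMap (𝕜 := ℝ) (E := Matrix (Fin n) (Fin n) ℝ)
      (F' := Matrix (Fin n) (Fin n) ℝ)).toLinearMap ∘ₗ LinearMap.mul ℝ (Matrix (Fin n) (Fin n) ℝ))

theorem mulL_apply (n : ℕ) (a b : Matrix (Fin n) (Fin n) ℝ) : mulL n a b = a * b := rfl

def Sm {n : ℕ} (U : Set Dom) (f : Dom → Matrix (Fin n) (Fin n) ℝ) : Prop :=
  ∀ q ∈ U, ContDiffAt ℝ (⊤ : ℕ∞) f q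

theorem Sm.diff {n : ℕ} {U : Set Dom} {f : Dom → Matrix (Fin n) (Fin n) ℝ} (hf : Sm U f)
    {q : Dom} (hq : q ∈ U) : DifferentiableAt ℝ f q :=
  (hf q hq).differentiableAt (by simp)

theorem Sm.mul {n : ℕ} {U : Set Dom} {f g : Dom → Matrix (Fin n) (Fin n) ℝ} (hf : Sm U f)
    (hg : Sm U g) : Sm U (fun q => f q * g q) := fun q hq =>
  (mulL n).isBoundedBilinearMap.contDiff.contDiffAt.comp q ((hf q hq).prodMk (hg q hq))

theorem Sm.add {n : ℕ} {U : Set Dom} {f g : Dom → Matrix (Fin n) (Fin n) ℝ} (hf : Sm U f)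
    (hg : Sm U g) : Sm U (fun q => f q + g q) := fun q hq => (hf q hq).add (hg q hq)

theorem Sm.sub {n : ℕ} {U : Set Dom} {f g : Dom → Matrix (Fin n) (Fin n) ℝ} (hf : Sm U f)
    (hg : Sm U g) : Sm U (fun q => f q - g q) := fun q hq => (hf q hq).sub (hg q hq)

theorem Sm.sum {n : ℕ} {U : Set Dom} {f : Fin 3 → Dom → Matrix (Fin n) (Fin n) ℝ}
    (hf : ∀ j, Sm U (f j)) : Sm U (fun q => ∑ j, f j q) := fun q hq =>
  ContDiffAt.sum fun j _ => hf j q hq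

theorem Sm.Dv {n : ℕ} {U : Set Dom} {f : Dom → Matrix (Fin n) (Fin n) ℝ} (hf : Sm U f)
    (v : Dom) : Sm U (Dv v f) := fun q hq =>
  ((hf q hq).fderiv_right (m := (⊤ : ℕ∞)) (by simp)).clm_apply contDiffAt_const

theorem contDiff_det (n : ℕ) : ContDiff ℝ (⊤ : ℕ∞)
    (fun A : Matrix (Fin n) (Fin n) ℝ => A.det) := by
  simp only [Matrix.det_apply]
  refine ContDiff.sum fun σ _ => ContDiff.const_smul _ (contDiff_prod fun i _ => ?_)
  exact contDiff_apply_apply ℝ ℝ (σ i) i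

theorem contDiff_adj (n : ℕ) : ContDiff ℝ (⊤ : ℕ∞)
    (fun A : Matrix (Fin n) (Fin n) ℝ => A.adjugate) := by
  refine contDiff_pi.2 fun i => contDiff_pi.2 fun j => ?_
  simp only [Matrix.adjugate_apply]
  refine (contDiff_det n).comp (contDiff_pi.2 fun a => contDiff_pi.2 fun b => ?_)
  simp only [Matrix.updateRow_apply]
  split_ifs
  · exact contDiff_const
  · exact contDiff_apply_apply ℝ ℝ a b

theorem Sm.inv {n : ℕ} {U : Set Dom} {g : Dom → Matrix (Fin n) (Fin n) ℝ} (hg : Sm U g)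
    (hu : ∀ q ∈ U, IsUnit (g q)) : Sm U (fun q => (g q)⁻¹) := fun q hq => by
  simp only [Matrix.inv_def, Ring.inverse_eq_inv']
  refine ContDiffAt.smul (ContDiffAt.inv ((contDiff_det n).contDiffAt.comp q (hg q hq)) ?_)
    ((contDiff_adj n).contDiffAt.comp q (hg q hq))
  exact ((Matrix.isUnit_iff_isUnit_det _).1 (hu q hq)).ne_zero

section
variable {n : ℕ} {U : Set Dom} {f g : Dom → Matrix (Fin n) (Fin n) ℝ} {q : Dom}

theorem Dv_mul (hf : Sm U f) (hg : Sm U g) (hq : q ∈ U) (v : Dom) :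
    Dv v (fun q => f q * g q) q = Dv v f q * g q + f q * Dv v g q := by
  have := (mulL n).isBoundedBilinearMap.hasFDerivAt (f q, g q)
  have := (this.comp q ((hf.diff hq).hasFDerivAt.prodMk (hg.diff hq).hasFDerivAt)).fderiv
  have h2 := congrArg (fun L => L v) this
  refine Eq.trans h2 ?_
  exact add_comm (f q * Dv v g q) (Dv v f q * g q)

theorem Dv_add (hf : Sm U f) (hg : Sm U g) (hq : q ∈ U) (v : Dom) :
    Dv v (fun q => f q + g q) q = Dv v f q + Dv v g q := by
  exact congrArg (fun L => L v) (fderiv_fun_add (hf.diff hq) (hg.diff hq))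

theorem Dv_sub (hf : Sm U f) (hg : Sm U g) (hq : q ∈ U) (v : Dom) :
    Dv v (fun q => f q - g q) q = Dv v f q - Dv v g q := by
  exact congrArg (fun L => L v) (fderiv_fun_sub (hf.diff hq) (hg.diff hq))

theorem Dv_sum {f : Fin 3 → Dom → Matrix (Fin n) (Fin n) ℝ}
    (hf : ∀ j, Sm U (f j)) (hq : q ∈ U) (v : Dom) :
    Dv v (fun q => ∑ j, f j q) q = ∑ j, Dv v (f j) q := by
  have h1 := congrArg (fun L => L v)
    (fderiv_fun_sum (u := Finset.univ) fun j _ => (hf j).diff hq)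
  refine Eq.trans h1 ?_
  exact ContinuousLinearMap.sum_apply _ _ _

theorem Dv_congr (hU : IsOpen U) (hfg : ∀ q ∈ U, f q = g q) (hq : q ∈ U) (v : Dom) :
    Dv v f q = Dv v g q := by
  unfold Dv
  rw [Filter.EventuallyEq.fderiv_eq]
  filter_upwards [hU.mem_nhds hq] with x hx using hfg x hx

theorem Dv_comm (hf : Sm U f) (hq : q ∈ U) (v w : Dom) :
    Dv v (Dv w f) q = Dv w (Dv v f) q := by
  have hs : IsSymmSndFDerivAt ℝ f q := (hf q hq).isSymmSndFDerivAt (by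
    simp only [minSmoothness_of_isRCLikeNormedField]; exact WithTop.coe_le_coe.2 (le_top : (2 : ℕ∞) ≤ ⊤))
  have hd : DifferentiableAt ℝ (fderiv ℝ f) q :=
    ((hf q hq).fderiv_right (m := (⊤ : ℕ∞)) (by simp)).differentiableAt (by simp)
  have key : ∀ v w : Dom, Dv v (Dv w f) q = fderiv ℝ (fderiv ℝ f) q v w := by
    intro v w
    have := (hd.hasFDerivAt.clm_apply (hasFDerivAt_const w q)).fderiv
    refine (congrArg (fun L => L v) this).trans ?_
    change fderiv ℝ f q 0 + fderiv ℝ (fderiv ℝ f) q v w = _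
    rw [map_zero, zero_add]
  rw [key, key]; exact hs.eq v w

/-- zero-curvature identity -/
theorem Dv_flat (hU : IsOpen U) {a b : Dom → Matrix (Fin n) (Fin n) ℝ} (hg : Sm U g)
    (hu : ∀ q ∈ U, IsUnit (g q)) (ha : Sm U a) (hb : Sm U b) (v w : Dom)
    (hav : ∀ q ∈ U, Dv v g q = a q * g q) (hbw : ∀ q ∈ U, Dv w g q = b q * g q)
    (hq : q ∈ U) : Dv v b q = Dv w a q + (a q * b q - b q * a q) := by
  have h1 := Dv_comm hg hq v w
  rw [Dv_congr hU hbw hq v, Dv_congr hU hav hq w, Dv_mul hb hg hq, Dv_mul ha hg hq,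
    hav q hq, hbw q hq] at h1
  apply (hu q hq).mul_right_cancel
  rw [add_mul, sub_mul, mul_assoc, mul_assoc, ← sub_eq_zero]
  rw [← sub_eq_zero] at h1
  rw [← h1]; abel

end

theorem stmt_12 (n : ℕ) (U : Set Dom) (hU : IsOpen U)
    (B : Fin 3 → Dom → Matrix (Fin n) (Fin n) ℝ) (g : Dom → Matrix (Fin n) (Fin n) ℝ)
    (hB : ∀ j, ContDiffOn ℝ (⊤ : ℕ∞) (B j) U) (hg : ContDiffOn ℝ (⊤ : ℕ∞) g U)
    (hginv : ∀ q ∈ U, IsUnit (g q))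
    (h : Fin 3 → Dom → Matrix (Fin n) (Fin n) ℝ)
    (hdef : ∀ (i : Fin 3) (q : Dom), h i q = Dx i g q * (g q)⁻¹)
    (heq : ∀ q ∈ U, Dt g q * (g q)⁻¹ =
      (∑ j, Dx j (h j) q) + ∑ j, (B j q * h j q - h j q * B j q)) :
    (∀ q ∈ U, ∀ i : Fin 3,
      Dt (h i) q - ∑ j, Dx j (Dx j (h i)) q =
        -(∑ j, (h j q * Dx j (h i) q - Dx j (h i) q * h j q)) +
          (∑ j, ((B j q * h j q - h j q * B j q) * h i q -
            h i q * (B j q * h j q - h j q * B j q))) +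
          Dx i (fun q' => ∑ j, (B j q' * h j q' - h j q' * B j q')) q) ∧
    (∀ q ∈ U,
      Dt g q - ∑ j, Dx j (Dx j g) q =
        ((∑ j, (B j q * h j q - h j q * B j q)) - ∑ j, h j q * h j q) * g q) := by
  have sg : Sm U g := fun q hq => hg.contDiffAt (hU.mem_nhds hq)
  have sB : ∀ j, Sm U (B j) := fun j q hq => (hB j).contDiffAt (hU.mem_nhds hq)
  let e : Fin 3 → Dom := fun j => ((0 : ℝ), EuclideanSpace.single j 1)
  let τ : Dom := ((1 : ℝ), (0 : EuclideanSpace ℝ (Fin 3)))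
  have hDx : ∀ j (f : Dom → Matrix (Fin n) (Fin n) ℝ), Dx j f = Dv (e j) f := fun _ _ => rfl
  have hDt : ∀ (f : Dom → Matrix (Fin n) (Fin n) ℝ), Dt f = Dv τ f := fun _ => rfl
  simp only [hDx, hDt] at *
  clear_value e τ
  have hh : ∀ i, h i = fun q => Dv (e i) g q * (g q)⁻¹ := fun i => funext (hdef i)
  have sh : ∀ i, Sm U (h i) := fun i => by
    rw [hh]; exact (sg.Dv _).mul (sg.inv hginv)
  have hcan : ∀ q ∈ U, (g q)⁻¹ * g q = 1 := fun q hq =>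
    Matrix.nonsing_inv_mul _ ((Matrix.isUnit_iff_isUnit_det _).1 (hginv q hq))
  have hgi : ∀ i, ∀ q ∈ U, Dv (e i) g q = h i q * g q := fun i q hq => by
    rw [hdef, mul_assoc, hcan q hq, mul_one]
  let S : Dom → Matrix (Fin n) (Fin n) ℝ := fun q => ∑ j, (B j q * h j q - h j q * B j q)
  have sS : Sm U S := Sm.sum fun j => ((sB j).mul (sh j)).sub ((sh j).mul (sB j))
  let T : Dom → Matrix (Fin n) (Fin n) ℝ := fun q => ∑ j, Dv (e j) (h j) q
  have sT : Sm U T := Sm.sum fun j => (sh j).Dv _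
  have hgt : ∀ q ∈ U, Dv τ g q = (T q + S q) * g q := fun q hq => by
    rw [← heq q hq, mul_assoc, hcan q hq, mul_one]
  refine ⟨fun q hq i => ?_, fun q hq => ?_⟩
  · have h1 := Dv_flat hU sg hginv (sT.add sS) (sh i) τ (e i) hgt (hgi i) hq
    rw [Dv_add sT sS hq, Dv_sum (fun j => (sh j).Dv _) hq] at h1
    have h2 : ∀ j, Dv (e i) (Dv (e j) (h j)) q = Dv (e j) (Dv (e j) (h i)) q +
        ((Dv (e j) (h i) q * h j q + h i q * Dv (e j) (h j) q) -
          (Dv (e j) (h j) q * h i q + h j q * Dv (e j) (h i) q)) := fun j => by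
      rw [Dv_comm (sh j) hq, Dv_congr hU (fun q hq =>
        Dv_flat hU sg hginv (sh i) (sh j) (e i) (e j) (hgi i) (hgi j) hq) hq,
        Dv_add ((sh i).Dv _) (((sh i).mul (sh j)).sub ((sh j).mul (sh i))) hq,
        Dv_sub ((sh i).mul (sh j)) ((sh j).mul (sh i)) hq, Dv_mul (sh i) (sh j) hq,
        Dv_mul (sh j) (sh i) hq]
    change _ = _ + _ + Dv (e i) S q
    rw [h1, Finset.sum_sub_distrib (f := fun j => (B j q * h j q - h j q * B j q) * h i q),
      ← Finset.sum_mul, ← Finset.mul_sum]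
    change _ = _ + (S q * h i q - h i q * S q) + Dv (e i) S q
    simp only [h2, T, Finset.sum_add_distrib, Finset.sum_sub_distrib, add_mul, mul_add,
      Finset.sum_mul, Finset.mul_sum]
    abel
  · have h2 : ∀ j, Dv (e j) (Dv (e j) g) q = (Dv (e j) (h j) q + h j q * h j q) * g q :=
      fun j => by
        rw [Dv_congr hU (hgi j) hq, Dv_mul (sh j) sg hq, hgi j q hq]; noncomm_ring
    change _ = (S q - _) * g q
    rw [hgt q hq]
    simp only [h2, ← Finset.sum_mul, Finset.sum_add_distrib]
    change (T q + S q) * g q - (T q + _) * g q = _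
    noncomm_ring
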